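/- Let n ≥ 2, let 1 ≤ k ≤ n−1, and set m := min(k, n−k). Let A and B be symmetric n×n matrices with rational entries such that A_{ij} = B_{ij} = 0 for all indices with 1 ≤ i ≤ k and 1 ≤ j ≤ n−k. Then there exist homogeneous polynomials g, h ∈ ℚ[x, y], with g homogeneous of degree m and h homogeneous of degree n − 2m, such that det(x·A − y·B) = g² · h in ℚ[x, y]. In particular, the binary n-ic form det(x·A − y·B) is divisible by the square of a homogeneous form of positive degree (or is identically zero), so it has a repeated factor over ℚ. -/

import Mathlib

open MvPolynomial

/-- The determinant of a matrix of linear forms is homogeneous. -/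
theorem det_isHomogeneous_aux {α : Type} [Fintype α] [DecidableEq α]
    (M : Matrix α α (MvPolynomial (Fin 2) ℚ)) (hM : ∀ i j, (M i j).IsHomogeneous 1) :
    M.det.IsHomogeneous (Fintype.card α) := by
  rw [Matrix.det_apply]
  refine IsHomogeneous.sum _ _ _ fun σ _ => ?_
  have h : (∏ i, M (σ i) i).IsHomogeneous (Fintype.card α) := by
    have := IsHomogeneous.prod Finset.univ (fun i => M (σ i) i) (fun _ => 1) (fun i _ => hM _ _)
    simpa using this
  rcases Int.units_eq_one_or (Equiv.Perm.sign σ) with h1 | h1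
  · rw [h1, one_smul]; exact h
  · rw [h1, Units.neg_smul, one_smul]; exact h.neg

/-- The permutation exchanging the two outer blocks. -/
def outerSwap (α β : Type) : Equiv.Perm ((α ⊕ β) ⊕ α) where
  toFun
    | .inl (.inl a) => .inr a
    | .inl (.inr b) => .inl (.inr b)
    | .inr a => .inl (.inl a)
  invFun
    | .inl (.inl a) => .inr a
    | .inl (.inr b) => .inl (.inr b)
    | .inr a => .inl (.inl a)
  left_inv := by rintro ((a | b) | a) <;> rfl
  right_inv := by rintro ((a | b) | a) <;> rfl

theorem det_block_aux {α β R : Type} [Fintype α] [DecidableEq α] [Fintype β] [DecidableEq β]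
    [CommRing R] (M : Matrix ((α ⊕ β) ⊕ α) ((α ⊕ β) ⊕ α) R) (hs : ∀ i j, M i j = M j i)
    (hz : ∀ a c, M (.inl (.inl a)) (.inl c) = 0) :
    ((Equiv.Perm.sign (outerSwap α β) : ℤ) : R) * M.det =
      (Matrix.of fun a a' => M (.inl (.inl a)) (.inr a')).det ^ 2 *
      (Matrix.of fun b b' => M (.inl (.inr b)) (.inl (.inr b'))).det := by
  rw [← Matrix.det_permute']
  have key : M.submatrix id (outerSwap α β) =
      Matrix.fromBlocks
        (Matrix.fromBlocks (Matrix.of fun a a' => M (.inl (.inl a)) (.inr a')) 0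
          (Matrix.of fun b a' => M (.inl (.inr b)) (.inr a'))
          (Matrix.of fun b b' => M (.inl (.inr b)) (.inl (.inr b')))) 0
        (Matrix.of fun a c => M (.inr a) (outerSwap α β (.inl c)))
        (Matrix.of fun a a' => M (.inl (.inl a)) (.inr a')).transpose := by
    ext i j
    rcases i with (a | b) | a <;> rcases j with (a' | b') | a' <;>
      simp [outerSwap, hz]
    · rw [hs, hz]
    · rw [hs]
  rw [key, Matrix.det_fromBlocks_zero₁₂, Matrix.det_fromBlocks_zero₁₂, Matrix.det_transpose]
  ring

theorem det_main_aux (m p : ℕ)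
    (M : Matrix (Fin (m + p + m)) (Fin (m + p + m)) (MvPolynomial (Fin 2) ℚ))
    (hM : ∀ i j, (M i j).IsHomogeneous 1) (hs : ∀ i j, M i j = M j i)
    (hz : ∀ i j : Fin (m + p + m), (i : ℕ) < m → (j : ℕ) < m + p → M i j = 0) :
    ∃ g h : MvPolynomial (Fin 2) ℚ, g.IsHomogeneous m ∧ h.IsHomogeneous p ∧
      M.det = g ^ 2 * h := by
  let e : (Fin m ⊕ Fin p) ⊕ Fin m ≃ Fin (m + p + m) :=
    (Equiv.sumCongr finSumFinEquiv (Equiv.refl _)).trans finSumFinEquiv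
  have key := det_block_aux (M.submatrix e e) (fun i j => hs _ _) (by
    intro a c
    apply hz
    · simp [e]
    · rcases c with c | c <;> simp [e] <;> omega)
  rw [Matrix.det_submatrix_equiv_self] at key
  have hg := det_isHomogeneous_aux
    (Matrix.of fun a a' => (M.submatrix e e) (.inl (.inl a)) (.inr a')) (fun _ _ => hM _ _)
  have hh := det_isHomogeneous_aux
    (Matrix.of fun b b' => (M.submatrix e e) (.inl (.inr b)) (.inl (.inr b')))
    (fun _ _ => hM _ _)
  rw [Fintype.card_fin] at hg hh
  rcases Int.units_eq_one_or (Equiv.Perm.sign (outerSwap (Fin m) (Fin p))) with h1 | h1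
  · refine ⟨_, _, hg, hh, ?_⟩
    rw [← key, h1]; simp
  · refine ⟨_, _, hg, hh.neg, ?_⟩
    rw [mul_neg, ← key, h1]; simp

/-- **Pairs with a common isotropic subspace have a resolvent with a repeated factor.**
Let `A`, `B` be symmetric `n × n` rational matrices vanishing on the block of indices
`i < k`, `j < n - k` (1-indexed: `1 ≤ i ≤ k`, `1 ≤ j ≤ n-k`).  Then, with
`m = min k (n-k)`, the binary `n`-ic form `det(x·A - y·B)` factors as `g² · h` with `g`
homogeneous of degree `m` and `h` homogeneous of degree `n - 2m`. -/
theorem det_eq_sq_mul_of_common_block_zero (n k : ℕ) (hn : 2 ≤ n) (hk1 : 1 ≤ k)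
    (hk2 : k ≤ n - 1)
    (A B : Matrix (Fin n) (Fin n) ℚ) (hA : A.IsSymm) (hB : B.IsSymm)
    (hz : ∀ i j : Fin n, (i : ℕ) < k → (j : ℕ) < n - k → A i j = 0 ∧ B i j = 0) :
    ∃ g h : MvPolynomial (Fin 2) ℚ,
      g.IsHomogeneous (min k (n - k)) ∧ h.IsHomogeneous (n - 2 * min k (n - k)) ∧
      Matrix.det (Matrix.of fun i j : Fin n =>
          X 0 * MvPolynomial.C (A i j) - X 1 * MvPolynomial.C (B i j)) = g ^ 2 * h := by
  have hlin : ∀ i j : Fin n, (X 0 * MvPolynomial.C (A i j) - X 1 * MvPolynomial.C (B i j) :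
      MvPolynomial (Fin 2) ℚ).IsHomogeneous 1 := fun i j =>
    ((isHomogeneous_X ℚ 0).mul (isHomogeneous_C _ _)).sub
      ((isHomogeneous_X ℚ 1).mul (isHomogeneous_C _ _))
  have hz' : ∀ i j : Fin n, (i : ℕ) < min k (n - k) → (j : ℕ) < n - min k (n - k) →
      A i j = 0 ∧ B i j = 0 := by
    intro i j hi hj
    rcases le_total k (n - k) with h | h
    · exact hz i j (by omega) (by omega)
    · rw [← hA.apply, ← hB.apply]
      exact hz j i (by omega) (by omega)
  obtain ⟨p, hp⟩ : ∃ p, p = n - 2 * min k (n - k) := ⟨_, rfl⟩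
  have hle : 2 * min k (n - k) ≤ n := by omega
  rw [← hp]
  generalize min k (n - k) = m at *
  clear hz hk1 hk2 hn
  obtain rfl : n = m + p + m := by omega
  refine det_main_aux m p _ hlin (fun i j => ?_) (fun i j hi hj => ?_)
  · simp only [Matrix.of_apply]
    rw [hA.apply, hB.apply]
  · obtain ⟨h1, h2⟩ := hz' i j hi (by omega)
    simp [h1, h2]
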